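/- Let 𝒜* be a family of nonempty proper subsets of N = {1,…,n} and suppose x* ∈ ℝⁿ satisfies x*(N) = v(N) and minimizes ∑_{S∈𝒜*} γ_S (v(S) − x(S))² over all x ∈ ℝⁿ with x(N) = v(N), with x*(S) ≤ v(S) for every S ∈ 𝒜* and x*(S) > v(S) for every nonempty proper subset S ∉ 𝒜*. Define the game v* by v*(S) = min{x*(S), v(S)} for nonempty proper subsets S of N, v*(N) = v(N), v*(∅) = 0. Then v* is balanced, x* ∈ C(v*), and v* is the unique closest balanced game to v: for every balanced game w with w(N) = v(N) and w ≠ v*, one has ∑_{∅≠S⊊N} γ_S (v(S) − v*(S))² < ∑_{∅≠S⊊N} γ_S (v(S) − w(S))². -/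

import Mathlib

open Finset

/-- Sum of an allocation `x` over a coalition `S`: `x(S) = ∑_{i ∈ S} x_i`. -/
def coalSum {n : ℕ} (x : Fin n → ℝ) (S : Finset (Fin n)) : ℝ := ∑ i ∈ S, x i

/-- `x` belongs to the core of the TU-game `v`. -/
def inCore {n : ℕ} (v : Finset (Fin n) → ℝ) (x : Fin n → ℝ) : Prop :=
  coalSum x Finset.univ = v Finset.univ ∧ ∀ S : Finset (Fin n), v S ≤ coalSum x S

/-- A game is balanced iff its core is nonempty. -/
def IsBalancedGame {n : ℕ} (v : Finset (Fin n) → ℝ) : Prop := ∃ x, inCore v x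

/-- The nonempty proper subsets of `N = {1,…,n}`. -/
def propSubsets (n : ℕ) : Finset (Finset (Fin n)) :=
  Finset.univ.filter (fun S => S ≠ ∅ ∧ S ≠ Finset.univ)

/-- Weighted squared distance `∑_{∅≠S⊊N} γ_S (v(S) − w(S))²` between games. -/
def dist2 {n : ℕ} (γ v w : Finset (Fin n) → ℝ) : ℝ :=
  ∑ S ∈ propSubsets n, γ S * (v S - w S) ^ 2

/-- `w` is a closest balanced game to `v` with respect to the weights `γ`:
`w` is a balanced game with `w(N) = v(N)` minimizing the weighted squared distance
to `v` among all balanced games `u` with `u(N) = v(N)`. -/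
def IsClosestBalanced {n : ℕ} (γ v w : Finset (Fin n) → ℝ) : Prop :=
  w ∅ = 0 ∧ IsBalancedGame w ∧ w Finset.univ = v Finset.univ ∧
    ∀ u : Finset (Fin n) → ℝ, u ∅ = 0 → IsBalancedGame u →
      u Finset.univ = v Finset.univ → dist2 γ v w ≤ dist2 γ v u

/-!
The normal equations of the restricted least squares problem say that the residual `v - x*` is
orthogonal, over `𝒜*`, to `x - x*` for every efficient `x`. If `x` is in the core of `w`, then
`w(S) ≤ x(S)`, and since the residual is nonnegative on `𝒜*` and `v* = v` off `𝒜*`, this makes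
`⟨v - v*, v* - w⟩` nonnegative. Expanding `‖v - w‖²` around `v*` then leaves a gap of at least
`‖v* - w‖² > 0`.
-/

section WeightedLeastSquares

variable {ι K : Type*} {s t : Finset ι} {γ f g h p y : ι → K}

/-- The weighted inner product of `f` and `g` over the finite index set `s`. The weights `γ`
may have any sign, so the form need not be positive semidefinite. -/
def weightedInner [CommRing K] (s : Finset ι) (γ f g : ι → K) : K :=
  ∑ i ∈ s, γ i * (f i * g i)

/-- The squared distance associated with `weightedInner`, the objective of weighted least squares.
For `s = propSubsets n` it is `dist2` by definition. -/
def weightedDistSq [CommRing K] (s : Finset ι) (γ f g : ι → K) : K :=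
  ∑ i ∈ s, γ i * (f i - g i) ^ 2

theorem weightedDistSq_eq_add [CommRing K] (s : Finset ι) (γ f g h : ι → K) :
    weightedDistSq s γ f h =
      weightedDistSq s γ f g + 2 * weightedInner s γ (f - g) (g - h) + weightedDistSq s γ g h := by
  simp only [weightedDistSq, weightedInner, Pi.sub_apply, mul_sum, ← sum_add_distrib]
  exact sum_congr rfl fun i _ ↦ by ring

theorem weightedDistSq_add_smul [CommRing K] (s : Finset ι) (γ f g d : ι → K) (c : K) :
    weightedDistSq s γ f (g + c • d) =
      weightedDistSq s γ f g - 2 * c * weightedInner s γ (f - g) d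
        + c ^ 2 * weightedInner s γ d d := by
  simp only [weightedDistSq, weightedInner, Pi.sub_apply, Pi.add_apply, Pi.smul_apply, smul_eq_mul,
    mul_sum, ← sum_add_distrib, ← sum_sub_distrib]
  exact sum_congr rfl fun i _ ↦ by ring

theorem weightedInner_nonneg [CommRing K] [PartialOrder K] [IsOrderedRing K]
    (hγ : ∀ i ∈ s, 0 ≤ γ i) (hf : ∀ i ∈ s, 0 ≤ f i) (hg : ∀ i ∈ s, 0 ≤ g i) :
    0 ≤ weightedInner s γ f g :=
  sum_nonneg fun i hi ↦ mul_nonneg (hγ i hi) (mul_nonneg (hf i hi) (hg i hi))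

theorem weightedDistSq_pos [CommRing K] [LinearOrder K] [IsStrictOrderedRing K]
    (hγ : ∀ i ∈ s, 0 < γ i) (hne : ∃ i ∈ s, f i ≠ g i) : 0 < weightedDistSq s γ f g := by
  obtain ⟨i, hi, hfg⟩ := hne
  exact sum_pos' (fun j hj ↦ mul_nonneg (hγ j hj).le (sq_nonneg _))
    ⟨i, hi, mul_pos (hγ i hi) (sq_pos_of_ne_zero (sub_ne_zero.2 hfg))⟩

theorem weightedDistSq_lt_of_weightedInner_nonneg [CommRing K] [LinearOrder K]
    [IsStrictOrderedRing K] (hγ : ∀ i ∈ s, 0 < γ i) (hne : ∃ i ∈ s, g i ≠ h i)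
    (hinner : 0 ≤ weightedInner s γ (f - g) (g - h)) :
    weightedDistSq s γ f g < weightedDistSq s γ f h := by
  have hpos := weightedDistSq_pos hγ hne
  rw [weightedDistSq_eq_add s γ f g h]
  linarith

theorem weightedInner_eq_zero_of_forall_weightedDistSq_le [Field K] [LinearOrder K]
    [IsStrictOrderedRing K] {d : ι → K}
    (hmin : ∀ c : K, weightedDistSq s γ f g ≤ weightedDistSq s γ f (g + c • d)) :
    weightedInner s γ (f - g) d = 0 := by
  have hquad : ∀ c : K, 0 ≤
      weightedInner s γ d d * (c * c) + -2 * weightedInner s γ (f - g) d * c + 0 := fun c ↦ by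
    have hc := hmin c
    rw [weightedDistSq_add_smul] at hc
    linarith
  -- With zero constant term, the discriminant is the square of the linear coefficient.
  have hdiscrim := discrim_le_zero hquad
  rw [discrim, mul_zero, sub_zero] at hdiscrim
  simpa using hdiscrim.antisymm (sq_nonneg _)

theorem weightedInner_sub_min_nonneg [CommRing K] [LinearOrder K] [IsOrderedRing K]
    (hts : t ⊆ s) (hγ : ∀ i ∈ t, 0 ≤ γ i) (hgf : ∀ i ∈ t, g i ≤ f i)
    (hfg : ∀ i ∈ s, i ∉ t → f i ≤ g i) (hp : ∀ i ∈ s, p i = min (g i) (f i))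
    (hhy : ∀ i ∈ t, h i ≤ y i) (hinner : weightedInner t γ (f - g) (y - g) ≤ 0) :
    0 ≤ weightedInner s γ (f - p) (p - h) := by
  have hpg : ∀ i ∈ t, p i = g i := fun i hi ↦ by rw [hp i (hts hi), min_eq_left (hgf i hi)]
  have hpf : ∀ i ∈ s, i ∉ t → p i = f i := fun i hi hit ↦ by
    rw [hp i hi, min_eq_right (hfg i hi hit)]
  have hnonneg : 0 ≤ weightedInner t γ (f - g) (y - h) :=
    weightedInner_nonneg hγ (fun i hi ↦ sub_nonneg.2 (hgf i hi))
      fun i hi ↦ sub_nonneg.2 (hhy i hi)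
  calc
    0 ≤ weightedInner t γ (f - g) (y - h) - weightedInner t γ (f - g) (y - g) :=
      sub_nonneg.2 (hinner.trans hnonneg)
    _ = weightedInner t γ (f - p) (p - h) := by
      simp only [weightedInner, Pi.sub_apply, ← sum_sub_distrib]
      exact sum_congr rfl fun i hi ↦ by rw [hpg i hi]; ring
    _ = weightedInner s γ (f - p) (p - h) :=
      sum_subset hts fun i hi hit ↦ by simp [hpf i hi hit]

end WeightedLeastSquares

section Games

variable {n : ℕ}

theorem mem_propSubsets {S : Finset (Fin n)} : S ∈ propSubsets n ↔ S ≠ ∅ ∧ S ≠ univ := by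
  simp [propSubsets]

theorem coalSum_add_smul_sub (x y : Fin n → ℝ) (c : ℝ) :
    coalSum (x + c • (y - x)) = coalSum x + c • (coalSum y - coalSum x) := by
  ext S
  simp [coalSum, sum_add_distrib, ← mul_sum]

theorem inCore_of_forall_propSubsets_le {v : Finset (Fin n) → ℝ} {x : Fin n → ℝ} (hv0 : v ∅ ≤ 0)
    (hxN : coalSum x univ = v univ) (hx : ∀ S ∈ propSubsets n, v S ≤ coalSum x S) :
    inCore v x := by
  refine ⟨hxN, fun S ↦ ?_⟩
  rcases eq_or_ne S ∅ with rfl | hS0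
  · simpa [coalSum] using hv0
  rcases eq_or_ne S univ with rfl | hSN
  · exact hxN.ge
  exact hx S (mem_propSubsets.2 ⟨hS0, hSN⟩)

theorem exists_mem_propSubsets_ne {α : Type*} {v w : Finset (Fin n) → α} (h0 : v ∅ = w ∅)
    (hN : v univ = w univ) (hne : v ≠ w) : ∃ S ∈ propSubsets n, v S ≠ w S := by
  obtain ⟨S, hS⟩ := Function.ne_iff.1 hne
  exact ⟨S, mem_propSubsets.2 ⟨fun h ↦ hS (h ▸ h0), fun h ↦ hS (h ▸ hN)⟩, hS⟩

theorem weightedInner_sub_coalSum_eq_zero {v γ : Finset (Fin n) → ℝ} {A : Finset (Finset (Fin n))}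
    {b : ℝ} {x₀ x : Fin n → ℝ} (hx₀ : coalSum x₀ univ = b)
    (hmin : ∀ y, coalSum y univ = b →
      weightedDistSq A γ v (coalSum x₀) ≤ weightedDistSq A γ v (coalSum y))
    (hx : coalSum x univ = b) :
    weightedInner A γ (v - coalSum x₀) (coalSum x - coalSum x₀) = 0 := by
  refine weightedInner_eq_zero_of_forall_weightedDistSq_le fun c ↦ ?_
  rw [← coalSum_add_smul_sub]
  exact hmin _ (by simp [coalSum_add_smul_sub, hx₀, hx])

end Games

/-- Corollary (Corollary `cor:optim`): if the CLOBIS algorithm terminates with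
output `x*` and active family `𝒜*`, i.e. `x*` minimizes the restricted objective
with `x*(S) ≤ v(S)` on `𝒜*` and `x*(S) > v(S)` off `𝒜*`, then the game
`v*(S) = min{x*(S), v(S)}` (for nonempty proper `S`, with `v*(N) = v(N)`, `v*(∅) = 0`)
is balanced, `x* ∈ C(v*)`, and `v*` is the unique closest balanced game to `v`. -/
theorem clobis_output_is_closest (n : ℕ) (v γ : Finset (Fin n) → ℝ)
    (hv0 : v ∅ = 0)
    (hγ : ∀ S ∈ propSubsets n, 0 < γ S)
    (A : Finset (Finset (Fin n))) (hA : A ⊆ propSubsets n)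
    (xs : Fin n → ℝ)
    (hxsN : coalSum xs Finset.univ = v Finset.univ)
    (hmin : ∀ x : Fin n → ℝ, coalSum x Finset.univ = v Finset.univ →
      ∑ S ∈ A, γ S * (v S - coalSum xs S) ^ 2 ≤ ∑ S ∈ A, γ S * (v S - coalSum x S) ^ 2)
    (hin : ∀ S ∈ A, coalSum xs S ≤ v S)
    (hout : ∀ S ∈ propSubsets n, S ∉ A → v S < coalSum xs S)
    (vstar : Finset (Fin n) → ℝ)
    (hvstar0 : vstar ∅ = 0)
    (hvstarN : vstar Finset.univ = v Finset.univ)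
    (hvstarS : ∀ S ∈ propSubsets n, vstar S = min (coalSum xs S) (v S)) :
    IsBalancedGame vstar ∧ inCore vstar xs ∧
      ∀ w : Finset (Fin n) → ℝ, w ∅ = 0 → IsBalancedGame w →
        w Finset.univ = v Finset.univ → w ≠ vstar →
        dist2 γ v vstar < dist2 γ v w := by
  have hcore : inCore vstar xs :=
    inCore_of_forall_propSubsets_le hvstar0.le (hxsN.trans hvstarN.symm)
      fun S hS ↦ (hvstarS S hS).trans_le (min_le_left _ _)
  refine ⟨⟨xs, hcore⟩, hcore, fun w hw0 ⟨x, hxN, hwx⟩ hwN hne ↦ ?_⟩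
  have hdiff : ∃ S ∈ propSubsets n, vstar S ≠ w S :=
    exists_mem_propSubsets_ne (hvstar0.trans hw0.symm) (hvstarN.trans hwN.symm) hne.symm
  have hnormal : weightedInner A γ (v - coalSum xs) (coalSum x - coalSum xs) = 0 :=
    weightedInner_sub_coalSum_eq_zero hxsN hmin (hxN.trans hwN)
  have hinner : 0 ≤ weightedInner (propSubsets n) γ (v - vstar) (vstar - w) :=
    weightedInner_sub_min_nonneg hA (fun S hS ↦ (hγ S (hA hS)).le) hin
      (fun S hS hSA ↦ (hout S hS hSA).le) hvstarS (fun S _ ↦ hwx S) hnormal.le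
  exact weightedDistSq_lt_of_weightedInner_nonneg hγ hdiff hinner
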